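/- Let (P, ≤, δ) ∈ ℙ. Any two tame expansions of 𝔐_P in the same language that are elementarily equivalent are isomorphic. -/

import Mathlib

namespace MP

open FirstOrder

/-- A purely relational language, with relation symbols `Rs k` of arity `k`. -/
def relLang (Rs : ℕ → Type v) : FirstOrder.Language :=
  ⟨fun _ => Empty, Rs⟩

/-- The universe of `𝔐_P`: the product `∏_{p ∈ P} δ(p)`. -/
abbrev MProd {P : Type u} (δ : P → ℕ) : Type u := (p : P) → Fin (δ p)

/-- The standard crosscutting equivalence relation `E_p` on `𝔐_P`:
`f E_p g` iff `f q = g q` for all `q ≤ p`. -/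
def stdE {P : Type u} [PartialOrder P] (δ : P → ℕ) (p : P) (f g : MProd δ) : Prop :=
  ∀ q : P, q ≤ p → f q = g q

/-- A structure on `𝔐_P` in a language with designated binary symbols `E p` is a tame
expansion of `𝔐_P` if the symbols `E p` are interpreted standardly and every relation
of the language is `E_p`-invariant for some `p`. -/
def IsTameExpansion {P : Type u} [PartialOrder P] (δ : P → ℕ) {Rs : ℕ → Type v}
    (E : P → Rs 2) (S : (relLang Rs).Structure (MProd δ)) : Prop :=
  (∀ (p : P) (x : Fin 2 → MProd δ),
    S.RelMap (E p : (relLang Rs).Relations 2) x ↔ stdE δ p (x 0) (x 1)) ∧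
  (∀ (k : ℕ) (R : Rs k), ∃ p : P, ∀ x y : Fin k → MProd δ,
    (∀ i, stdE δ p (x i) (y i)) →
      (S.RelMap (R : (relLang Rs).Relations k) x ↔ S.RelMap (R : (relLang Rs).Relations k) y))

end MP

open MP FirstOrder

/-!
A tame relation depends only on finitely many coordinates, so its truth value is clopen in the
profinite space `𝔐_P`. Hence the maps `σ : 𝔐_P → 𝔐_P` that preserve and reflect a given relation
form a closed subset of the compact space `𝔐_P → 𝔐_P`, and it suffices to preserve finitely many
relations at a time. Modulo finitely many coordinates there are only finitely many points, and
such a configuration is described by an existential sentence, so it can be copied from the first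
expansion into the second. The resulting `σ` preserves and reflects all the relations `E_p`, which
makes it a bijection because each `E_p` has finitely many classes.
-/

namespace MP

open Function Set Language

section ExistentialFormulas

variable {L : Language} {α β : Type*} {n k : ℕ}

theorem isQF_iInf [Finite β] {φ : β → L.BoundedFormula α n} (hφ : ∀ b, (φ b).IsQF) :
    (BoundedFormula.iInf φ).IsQF := by
  have foldr_inf (l : List β) : ((l.map φ).foldr (· ⊓ ·) ⊤).IsQF := by
    induction l with
    | nil => exact BoundedFormula.IsQF.top
    | cons b l ih => exact (hφ b).inf ih
  exact foldr_inf _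

theorem isExistential_exs {φ : L.BoundedFormula α n} (hφ : φ.IsExistential) :
    φ.exs.IsExistential := by
  induction n with
  | zero => exact hφ
  | succ n ih => exact ih hφ.ex

theorem isExistential_iExs [Finite β] {φ : L.Formula (α ⊕ β)} (hφ : φ.IsQF) :
    (φ.iExs β).IsExistential :=
  isExistential_exs (hφ.relabel _).isExistential

open Classical in
/-- The literal `R(ts)` if `b` holds and `¬ R(ts)` otherwise. -/
noncomputable def relLiteral (R : L.Relations k) (ts : Fin k → L.Term α) (b : Prop) :
    L.Formula α :=
  if b then R.formula ts else (R.formula ts).not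

theorem isQF_relLiteral (R : L.Relations k) (ts : Fin k → L.Term α) (b : Prop) :
    (relLiteral R ts b).IsQF := by
  unfold relLiteral
  split_ifs
  exacts [(R.isAtomic _).isQF, (R.isAtomic _).isQF.not]

theorem realize_relLiteral {M : Type*} [L.Structure M] {R : L.Relations k}
    {ts : Fin k → L.Term α} {b : Prop} {v : α → M} :
    (relLiteral R ts b).Realize v ↔ (Structure.RelMap R (fun i => (ts i).realize v) ↔ b) := by
  by_cases hb : b <;> simp [relLiteral, hb]

/-- The diagram of the finite tuple `e` in `S`, restricted to the finitely many relation symbols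
in `F`. The empty summand turns its existential closure `Formula.iExs` into a sentence. -/
noncomputable def relDiagram {M : Type*} (S : L.Structure M) (F : Finset (Σ k, L.Relations k))
    [Finite β] (e : β → M) : L.Formula (Empty ⊕ β) :=
  BoundedFormula.iInf fun c : Σ R : F, Fin R.1.1 → β =>
    relLiteral c.1.1.2 (fun i => Term.var (Sum.inr (c.2 i))) (S.RelMap c.1.1.2 (e ∘ c.2))

theorem isQF_relDiagram {M : Type*} (S : L.Structure M) (F : Finset (Σ k, L.Relations k))
    [Finite β] (e : β → M) : (relDiagram S F e).IsQF :=
  isQF_iInf fun _ => isQF_relLiteral _ _ _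

theorem realize_relDiagram {M N : Type*} {S : L.Structure M} {F : Finset (Σ k, L.Relations k)}
    [Finite β] {e : β → M} [L.Structure N] {v : Empty → N} {t : β → N} :
    (relDiagram S F e).Realize (Sum.elim v t) ↔ ∀ R ∈ F, ∀ a : Fin R.1 → β,
      Structure.RelMap R.2 (t ∘ a) ↔ S.RelMap R.2 (e ∘ a) := by
  refine BoundedFormula.realize_iInf.trans ?_
  simp only [Sigma.forall, Subtype.forall]
  exact forall₄_congr fun _ _ _ _ => realize_relLiteral

end ExistentialFormulas

section RelationPreservingMaps

variable {L : Language} {M N A : Type*}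

/-- Every existential sentence true in `S₁` is true in `S₂`. This is the part of elementary
equivalence needed to copy finite configurations. -/
def ExistentialTransfer (S₁ : L.Structure M) (S₂ : L.Structure N) : Prop :=
  ∀ φ : L.Sentence, φ.IsExistential →
    @Sentence.Realize L M S₁ φ → @Sentence.Realize L N S₂ φ

/-- The map `σ` preserves and reflects the relation symbol `R`. The structures are explicit
arguments because they may live on the same type. -/
def PreservesRel (S₁ : L.Structure M) (S₂ : L.Structure N) (σ : M → N) {k : ℕ}
    (R : L.Relations k) : Prop :=
  ∀ x : Fin k → M, S₂.RelMap R (σ ∘ x) ↔ S₁.RelMap R x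

variable {S₁ : L.Structure M} {S₂ : L.Structure N}

theorem ExistentialTransfer.exists_relMap_comp_iff (h : ExistentialTransfer S₁ S₂)
    (F : Finset (Σ k, L.Relations k)) [Finite A] (e : A → M) :
    ∃ t : A → N, ∀ R ∈ F, ∀ a : Fin R.1 → A,
      S₂.RelMap R.2 (t ∘ a) ↔ S₁.RelMap R.2 (e ∘ a) := by
  have diagram_S₁ : @Sentence.Realize L M S₁ ((relDiagram S₁ F e).iExs A) :=
    Formula.realize_iExs.2 ⟨e, realize_relDiagram.2 fun _ _ _ => Iff.rfl⟩
  have diagram_S₂ := h _ (isExistential_iExs (isQF_relDiagram S₁ F e)) diagram_S₁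
  obtain ⟨t, ht⟩ := Formula.realize_iExs.1 diagram_S₂
  exact ⟨t, realize_relDiagram.1 ht⟩

theorem ExistentialTransfer.exists_preservesRel_of_factors (h : ExistentialTransfer S₁ S₂)
    (F : Finset (Σ k, L.Relations k)) [Finite A] (ρ : M → A)
    (hρ : ∀ R ∈ F, ∀ x y : Fin R.1 → M, ρ ∘ x = ρ ∘ y → (S₁.RelMap R.2 x ↔ S₁.RelMap R.2 y)) :
    ∃ σ : M → N, ∀ R ∈ F, PreservesRel S₁ S₂ σ R.2 := by
  obtain ⟨t, ht⟩ := h.exists_relMap_comp_iff F (rangeSplitting ρ)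
  refine ⟨t ∘ rangeFactorization ρ, fun R hR x => ?_⟩
  calc S₂.RelMap R.2 (t ∘ rangeFactorization ρ ∘ x)
      ↔ S₁.RelMap R.2 (rangeSplitting ρ ∘ rangeFactorization ρ ∘ x) := ht R hR _
    _ ↔ S₁.RelMap R.2 x := hρ R hR _ _ <| funext fun i => apply_rangeSplitting ρ _

theorem isClosed_setOfPred_preservesRel [TopologicalSpace N] {k : ℕ} {R : L.Relations k}
    (hR : IsClopen {y | S₂.RelMap R y}) : IsClosed {σ | PreservesRel S₁ S₂ σ R} := by
  simp only [PreservesRel, ofPred_forall]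
  refine isClosed_iInter fun x => ?_
  have continuous_comp_right : Continuous fun σ : M → N => σ ∘ x := Pi.continuous_precomp x
  by_cases hx : S₁.RelMap R x
  · simpa only [hx, iff_true, preimage_ofPred_eq] using hR.isClosed.preimage continuous_comp_right
  · simpa only [hx, iff_false, preimage_compl, preimage_ofPred_eq, compl_ofPred]
      using hR.compl.isClosed.preimage continuous_comp_right

theorem exists_forall_preservesRel_of_finset [TopologicalSpace N] [CompactSpace N]
    (hS₂ : ∀ (k : ℕ) (R : L.Relations k), IsClopen {y | S₂.RelMap R y})
    (hfin : ∀ F : Finset (Σ k, L.Relations k), ∃ σ, ∀ R ∈ F, PreservesRel S₁ S₂ σ R.2) :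
    ∃ σ, ∀ (k : ℕ) (R : L.Relations k), PreservesRel S₁ S₂ σ R := by
  obtain ⟨σ, hσ⟩ := CompactSpace.iInter_nonempty
    (t := fun R : Σ k, L.Relations k => {σ | PreservesRel S₁ S₂ σ R.2})
    (fun R => isClosed_setOfPred_preservesRel (hS₂ R.1 R.2))
    (fun F => (hfin F).imp fun _ hσ => mem_iInter₂.2 hσ)
  exact ⟨σ, fun k R => mem_iInter.1 hσ ⟨k, R⟩⟩

theorem nonempty_equiv_of_bijective [L.IsRelational] {σ : M → N} (hσ : Bijective σ)
    (hrel : ∀ (k : ℕ) (R : L.Relations k), PreservesRel S₁ S₂ σ R) :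
    Nonempty (@Language.Equiv L M N S₁ S₂) :=
  ⟨@Language.Equiv.mk L M N S₁ S₂ (Equiv.ofBijective σ hσ) (fun f => isEmptyElim f) (hrel _)⟩

end RelationPreservingMaps

theorem exists_apply_eq_of_reflects {X A : Type*} [Finite A] {ρ : X → A} {σ : X → X}
    (hσ : ∀ x y, ρ (σ x) = ρ (σ y) → ρ x = ρ y) (y : X) : ∃ x, ρ (σ x) = ρ y := by
  have injective_on_range :
      Injective fun a : range ρ => rangeFactorization ρ (σ (rangeSplitting ρ a)) := by
    intro a b hab
    simpa only [apply_rangeSplitting, Subtype.coe_inj] using hσ _ _ (congrArg Subtype.val hab)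
  obtain ⟨a, ha⟩ := Finite.surjective_of_injective injective_on_range (rangeFactorization ρ y)
  exact ⟨rangeSplitting ρ a, congrArg Subtype.val ha⟩

section CrosscuttingEquivalences

variable {P : Type*} [PartialOrder P] {δ : P → ℕ} {p : P}

theorem stdE_iff_domRestrict_eq {f g : MProd δ} :
    stdE δ p f g ↔ (Iic p).domRestrict f = (Iic p).domRestrict g := by
  simp only [stdE, funext_iff, domRestrict_apply, Subtype.forall, mem_Iic]

theorem exists_forall_stdE_of_coherent {F : P → MProd δ}
    (hF : ∀ p q, q ≤ p → stdE δ q (F q) (F p)) : ∃ f, ∀ p, stdE δ p f (F p) :=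
  ⟨fun p => F p p, fun p q hqp => hF p q hqp q le_rfl⟩

theorem isClopen_of_stdE_invariant (hp : (Iic p).Finite) {ι : Type*} [Finite ι]
    {X : Set (ι → MProd δ)}
    (hX : ∀ x y, (∀ i, stdE δ p (x i) (y i)) → (x ∈ X ↔ y ∈ X)) : IsClopen X := by
  have := hp.to_subtype
  let ρ : (ι → MProd δ) → ι → (q : Iic p) → Fin (δ q) := fun x i => (Iic p).domRestrict (x i)
  have continuous_ρ : Continuous ρ :=
    continuous_pi fun i => continuous_pi fun q =>
      (continuous_apply (q : P)).comp (continuous_apply i)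
  have preimage_image : ρ ⁻¹' (ρ '' X) = X :=
    Subset.antisymm
      (fun x ⟨y, hy, hyx⟩ => (hX y x fun i => stdE_iff_domRestrict_eq.2 (congrFun hyx i)).1 hy)
      (subset_preimage_image ρ X)
  exact preimage_image ▸ (isClopen_discrete (ρ '' X)).preimage continuous_ρ

theorem bijective_of_stdE_iff (hdf : ∀ p : P, (Iic p).Finite) {σ : MProd δ → MProd δ}
    (hσ : ∀ p f g, stdE δ p (σ f) (σ g) ↔ stdE δ p f g) : Bijective σ := by
  refine ⟨fun f g hfg => funext fun p => (hσ p f g).1 (fun q _ => congrFun hfg q) p le_rfl,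
    fun g => ?_⟩
  have surjective_mod (p : P) : ∃ f, stdE δ p (σ f) g := by
    have := (hdf p).to_subtype
    simp only [stdE_iff_domRestrict_eq] at hσ ⊢
    exact exists_apply_eq_of_reflects (fun x y => (hσ p x y).1) g
  choose F hF using surjective_mod
  have coherent (p q : P) (hqp : q ≤ p) : stdE δ q (F q) (F p) :=
    (hσ q _ _).1 fun r hr => (hF q r hr).trans (hF p r (hr.trans hqp)).symm
  obtain ⟨f, hf⟩ := exists_forall_stdE_of_coherent coherent
  exact ⟨f, funext fun p => ((hσ p _ _).2 (hf p) p le_rfl).trans (hF p p le_rfl)⟩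

end CrosscuttingEquivalences

section TameExpansions

instance {Rs : ℕ → Type*} : (relLang Rs).IsRelational :=
  fun _ => inferInstanceAs (IsEmpty Empty)

variable {P : Type*} [PartialOrder P] {δ : P → ℕ} {Rs : ℕ → Type*} {E : P → Rs 2}
  {S₁ S₂ : (relLang Rs).Structure (MProd δ)}

theorem IsTameExpansion.isClopen_setOfPred_relMap (hdf : ∀ p : P, (Iic p).Finite)
    (h : IsTameExpansion δ E S₁) (k : ℕ) (R : (relLang Rs).Relations k) :
    IsClopen {x | S₁.RelMap R x} :=
  let ⟨p, hp⟩ := h.2 k R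
  isClopen_of_stdE_invariant (hdf p) hp

theorem IsTameExpansion.exists_preservesRel_of_finset {N : Type*}
    {S : (relLang Rs).Structure N} (hdf : ∀ p : P, (Iic p).Finite)
    (h : IsTameExpansion δ E S₁) (htr : ExistentialTransfer S₁ S)
    (F : Finset (Σ k, (relLang Rs).Relations k)) :
    ∃ σ, ∀ R ∈ F, PreservesRel S₁ S σ R.2 := by
  choose p hp using h.2
  let Q : Set P := ⋃ R ∈ F, Iic (p R.1 R.2)
  have : Finite Q := (F.finite_toSet.biUnion fun R _ => hdf _).to_subtype
  refine htr.exists_preservesRel_of_factors F Q.domRestrict fun R hR x y hxy => ?_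
  refine hp R.1 R.2 x y fun i q hq => ?_
  exact congrFun (congrFun hxy i) ⟨q, mem_biUnion hR hq⟩

theorem IsTameExpansion.stdE_iff_of_preservesRel (h₁ : IsTameExpansion δ E S₁)
    (h₂ : IsTameExpansion δ E S₂) {σ : MProd δ → MProd δ} {p : P}
    (hσ : PreservesRel S₁ S₂ σ (E p : (relLang Rs).Relations 2)) (f g : MProd δ) :
    stdE δ p (σ f) (σ g) ↔ stdE δ p f g :=
  (h₂.1 p _).symm.trans <| (hσ ![f, g]).trans (h₁.1 p _)

end TameExpansions

end MP

theorem tame_expansions_isomorphic_of_elementarilyEquivalent_general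
    {P : Type*} [PartialOrder P] (hdf : ∀ p : P, (Set.Iic p).Finite) {δ : P → ℕ}
    {Rs : ℕ → Type*} {E : P → Rs 2} {S₁ S₂ : (relLang Rs).Structure (MProd δ)}
    (h₁ : IsTameExpansion δ E S₁) (h₂ : IsTameExpansion δ E S₂)
    (htr : ExistentialTransfer S₁ S₂) :
    Nonempty (@Language.Equiv (relLang Rs) (MProd δ) (MProd δ) S₁ S₂) := by
  obtain ⟨σ, hσ⟩ := exists_forall_preservesRel_of_finset (h₂.isClopen_setOfPred_relMap hdf)
    (h₁.exists_preservesRel_of_finset hdf htr)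
  have hE (p : P) : ∀ f g, stdE δ p (σ f) (σ g) ↔ stdE δ p f g :=
    h₁.stdE_iff_of_preservesRel h₂ (hσ 2 (E p))
  exact nonempty_equiv_of_bijective (bijective_of_stdE_iff hdf hE) hσ

/-- Two elementarily equivalent tame expansions of `𝔐_P` (in the same language)
are isomorphic. -/
theorem tame_expansions_isomorphic_of_elementarilyEquivalent
    {P : Type u} [PartialOrder P] [Countable P]
    (hdf : ∀ p : P, (Set.Iic p).Finite)
    (δ : P → ℕ) (hδ : ∀ p, 2 ≤ δ p)
    {Rs : ℕ → Type v} (E : P → Rs 2)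
    (S₁ S₂ : (relLang Rs).Structure (MProd δ))
    (h₁ : IsTameExpansion δ E S₁) (h₂ : IsTameExpansion δ E S₂)
    (heq : @Language.ElementarilyEquivalent (relLang Rs) (MProd δ) (MProd δ) S₁ S₂) :
    Nonempty (@Language.Equiv (relLang Rs) (MProd δ) (MProd δ) S₁ S₂) :=
  tame_expansions_isomorphic_of_elementarilyEquivalent_general hdf h₁ h₂ fun φ _ hφ =>
    ((@Language.elementarilyEquivalent_iff (relLang Rs) _ _ S₁ S₂).1 heq φ).1 hφ
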